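/- arXiv:2505.24703 — 4 statements merged into one kernel-verified Lean document; each statement's English description precedes it below -/
import Mathlib

section
/- Let x ∈ X be an image, R a set of patch regions, y : Fin c → Bool, infer : Fin c → X → Bool, and κ : Fin c → Bool such that for every class i with κ i = true one has infer i x' = y i for every x' ∈ S(x,R). Set TP_lower := |{i : κ i = true ∧ y i = true}|, FP_upper := |{i : κ i = false ∧ y i = false}|, FN_upper := |{i : κ i = false ∧ y i = true}|. Then for every x' ∈ S(x,R), with ŷ := (fun i => infer i x'), one has (TP_lower : ℝ)/(TP_lower + FP_upper) ≤ TP(y,ŷ)/(TP(y,ŷ) + FP(y,ŷ)) and (TP_lower : ℝ)/(TP_lower + FN_upper) ≤ TP(y,ŷ)/(TP(y,ŷ) + FN(y,ŷ)). (Certified precision and certified recall lower-bound the true precision and recall of the defended multi-label classifier irrespective of the attempted patch attack.) -/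
/-- Images with width `w`, height `h`, and `γ` channels. -/
abbrev Img (w h γ : ℕ) := Fin w → Fin h → Fin γ → ℝ

/-- The patched image: pixels inside the patch region (`r i j = false`) are replaced
by adversarial content `x''`. -/
def patch {w h γ : ℕ} (x : Img w h γ) (r : Fin w → Fin h → Bool) (x'' : Img w h γ) :
    Img w h γ :=
  fun i j k => if r i j then x i j k else x'' i j k

/-- The patch threat model `S(x, R)`. -/
def patchSet {w h γ : ℕ} (x : Img w h γ) (R : Set (Fin w → Fin h → Bool)) :
    Set (Img w h γ) :=
  { x' | ∃ r ∈ R, ∃ x'' : Img w h γ, x' = patch x r x'' }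

/-- True-positive count. -/
def TP {c : ℕ} (y yhat : Fin c → Bool) : ℕ :=
  (Finset.univ.filter fun i : Fin c => y i = true ∧ yhat i = true).card

/-- False-positive count. -/
def FP {c : ℕ} (y yhat : Fin c → Bool) : ℕ :=
  (Finset.univ.filter fun i : Fin c => y i = false ∧ yhat i = true).card

/-- False-negative count. -/
def FN {c : ℕ} (y yhat : Fin c → Bool) : ℕ :=
  (Finset.univ.filter fun i : Fin c => y i = true ∧ yhat i = false).card

/-- The number of positive labels certified by `κ`: these are true positives of every
prediction that is correct on the certified classes. -/
def TPLower {c : ℕ} (κ y : Fin c → Bool) : ℕ :=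
  (Finset.univ.filter fun i : Fin c => κ i = true ∧ y i = true).card

/-- The number of negative labels not certified by `κ`: in the worst case each of them becomes
a false positive. -/
def FPUpper {c : ℕ} (κ y : Fin c → Bool) : ℕ :=
  (Finset.univ.filter fun i : Fin c => κ i = false ∧ y i = false).card

/-- The number of positive labels not certified by `κ`: in the worst case each of them becomes
a false negative. -/
def FNUpper {c : ℕ} (κ y : Fin c → Bool) : ℕ :=
  (Finset.univ.filter fun i : Fin c => κ i = false ∧ y i = true).card

theorem div_self_add_le_div_self_add {𝕜 : Type*} [Field 𝕜] [LinearOrder 𝕜]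
    [IsStrictOrderedRing 𝕜] {a b p q : 𝕜} (ha : 0 ≤ a) (hq : 0 ≤ q) (hap : a ≤ p) (hqb : q ≤ b) :
    a / (a + b) ≤ p / (p + q) := by
  have hp : 0 ≤ p := ha.trans hap
  have hb : 0 ≤ b := hq.trans hqb
  -- For `a = 0` a denominator may vanish, and `x / 0 = 0` still gives the bound.
  rcases ha.eq_or_lt with rfl | ha_pos
  · rw [zero_div]
    positivity
  · have hp_pos : 0 < p := ha_pos.trans_le hap
    rw [div_le_div_iff₀ (by positivity) (by positivity)]
    calc a * (p + q) = p * a + a * q := by ring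
      _ ≤ p * a + p * b := by gcongr
      _ = p * (a + b) := by ring

section CertifiedCounts

variable {c : ℕ} {κ y yhat : Fin c → Bool}

theorem TPLower_le_TP (h_correct : ∀ i, κ i = true → yhat i = y i) :
    TPLower κ y ≤ TP y yhat :=
  Finset.card_le_card <| Finset.monotone_filter_right _ fun i _ ⟨hκ, hy⟩ =>
    ⟨hy, (h_correct i hκ).trans hy⟩

theorem FP_le_FPUpper (h_correct : ∀ i, κ i = true → yhat i = y i) :
    FP y yhat ≤ FPUpper κ y :=
  Finset.card_le_card <| Finset.monotone_filter_right _ fun i _ ⟨hy, hyhat⟩ =>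
    ⟨Bool.eq_false_iff.mpr fun hκ => by simpa [hy, hyhat] using h_correct i hκ, hy⟩

theorem FN_le_FNUpper (h_correct : ∀ i, κ i = true → yhat i = y i) :
    FN y yhat ≤ FNUpper κ y :=
  Finset.card_le_card <| Finset.monotone_filter_right _ fun i _ ⟨hy, hyhat⟩ =>
    ⟨Bool.eq_false_iff.mpr fun hκ => by simpa [hy, hyhat] using h_correct i hκ, hy⟩

theorem certified_precision_le (h_correct : ∀ i, κ i = true → yhat i = y i) :
    (TPLower κ y : ℝ) / (TPLower κ y + FPUpper κ y) ≤ (TP y yhat : ℝ) / (TP y yhat + FP y yhat) :=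
  div_self_add_le_div_self_add (Nat.cast_nonneg _) (Nat.cast_nonneg _)
    (Nat.cast_le.mpr (TPLower_le_TP h_correct)) (Nat.cast_le.mpr (FP_le_FPUpper h_correct))

theorem certified_recall_le (h_correct : ∀ i, κ i = true → yhat i = y i) :
    (TPLower κ y : ℝ) / (TPLower κ y + FNUpper κ y) ≤ (TP y yhat : ℝ) / (TP y yhat + FN y yhat) :=
  div_self_add_le_div_self_add (Nat.cast_nonneg _) (Nat.cast_nonneg _)
    (Nat.cast_le.mpr (TPLower_le_TP h_correct)) (Nat.cast_le.mpr (FN_le_FNUpper h_correct))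

end CertifiedCounts

theorem certified_precision_recall_lower_bound_general {α : Type*} {c : ℕ} (S : Set α)
    (y : Fin c → Bool) (infer : Fin c → α → Bool) (κ : Fin c → Bool)
    (hκ : ∀ i : Fin c, κ i = true → ∀ x' ∈ S, infer i x' = y i) :
    ∀ x' ∈ S,
      (TPLower κ y : ℝ) / (TPLower κ y + FPUpper κ y)
          ≤ (TP y (fun i => infer i x') : ℝ)
            / (TP y (fun i => infer i x') + FP y (fun i => infer i x'))
      ∧ (TPLower κ y : ℝ) / (TPLower κ y + FNUpper κ y)
          ≤ (TP y (fun i => infer i x') : ℝ)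
            / (TP y (fun i => infer i x') + FN y (fun i => infer i x')) := by
  intro x' hx'
  have h_correct : ∀ i, κ i = true → infer i x' = y i := fun i hi => hκ i hi x' hx'
  exact ⟨certified_precision_le h_correct, certified_recall_le h_correct⟩

/-- Certified precision and certified recall lower-bound the true precision and recall
of the defended multi-label classifier irrespective of the attempted patch attack. -/
theorem certified_precision_recall_lower_bound {w h γ c : ℕ}
    (x : Img w h γ) (R : Set (Fin w → Fin h → Bool))
    (y : Fin c → Bool) (infer : Fin c → Img w h γ → Bool) (κ : Fin c → Bool)
    (hκ : ∀ i : Fin c, κ i = true → ∀ x' ∈ patchSet x R, infer i x' = y i)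
    (TPlower FPupper FNupper : ℕ)
    (hTP : TPlower = (Finset.univ.filter fun i : Fin c => κ i = true ∧ y i = true).card)
    (hFP : FPupper = (Finset.univ.filter fun i : Fin c => κ i = false ∧ y i = false).card)
    (hFN : FNupper = (Finset.univ.filter fun i : Fin c => κ i = false ∧ y i = true).card) :
    ∀ x' ∈ patchSet x R,
      (TPlower : ℝ) / (TPlower + FPupper)
          ≤ (TP y (fun i => infer i x') : ℝ)
            / (TP y (fun i => infer i x') + FP y (fun i => infer i x'))
      ∧ (TPlower : ℝ) / (TPlower + FNupper)
          ≤ (TP y (fun i => infer i x') : ℝ)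
            / (TP y (fun i => infer i x') + FN y (fun i => infer i x')) := by
  subst hTP hFP hFN
  exact certified_precision_recall_lower_bound_general (patchSet x R) y infer κ hκ
end

section
/- Let x ∈ X, R a finite set of patch regions, y : Fin c → Bool, infer : Fin c → X → Bool, and κ : Fin c → Bool such that for every class i with κ i = true one has infer i x' = y i for every x' ∈ S(x,R). Let I := {i : κ i = false ∧ y i = true} be the uncertified positive classes, and suppose for each i ∈ I there is λ i : R → Bool with: λ i r = true → infer i (patch(x,r,x'')) = true for all x'' ∈ X. Set TP_lower := |{i : κ i = true ∧ y i = true}| and FN_new := max_{r' ∈ R} |{i ∈ I : λ i r' = false}|. Then for every r ∈ R and every x'' ∈ X, the prediction ŷ := (fun i => infer i (patch(x,r,x''))) satisfies TP(y,ŷ) ≥ TP_lower + (|I| − FN_new) and FN(y,ŷ) ≤ FN_new. (Location-aware certification yields the improved true-positive lower bound TP_new = TP_lower + (FN − FN_new) under a single-patch attacker.) -/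
/-!
The certificates `κ` are themselves a prediction, whose true positives are the certified positive
classes and whose false negatives are the uncertified ones. Any two predictions have the same
`TP + FN`, namely the number of positive classes. So both bounds follow once the false negatives of
the attacked prediction are confined to the uncertified positive classes that are vulnerable at the
attacked location.
-/

section Counting

variable {c : ℕ} (y yhat κ : Fin c → Bool)

lemma TP_comm : TP y yhat = TP yhat y := by
  simp only [TP, and_comm]

lemma TP_add_FN : TP y yhat + FN y yhat = (Finset.univ.filter fun i => y i = true).card := by
  rw [← Finset.card_filter_add_card_filter_not (fun i => yhat i = true)]
  simp only [TP, FN, Finset.filter_filter, Bool.not_eq_true]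

/-- The set `I` of positive classes that the certificates `κ` leave uncertified. -/
def uncertifiedPositives : Finset (Fin c) :=
  Finset.univ.filter fun i => κ i = false ∧ y i = true

lemma card_uncertifiedPositives : (uncertifiedPositives y κ).card = FN y κ := by
  simp only [uncertifiedPositives, FN, and_comm]

variable {y yhat κ}

lemma FN_le_card_filter_uncertifiedPositives {robust : Fin c → Bool}
    (hκ : ∀ i, κ i = true → y i = true → yhat i = true)
    (hrobust : ∀ i ∈ uncertifiedPositives y κ, robust i = true → yhat i = true) :
    FN y yhat ≤ ((uncertifiedPositives y κ).filter fun i => robust i = false).card := by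
  refine Finset.card_le_card fun i hi => ?_
  obtain ⟨hy, hmiss⟩ : y i = true ∧ yhat i = false := by simpa using hi
  have not_detected : ¬ yhat i = true := by simp [hmiss]
  have uncertified : κ i = false := by
    simpa using fun certified => not_detected (hκ i certified hy)
  have mem : i ∈ uncertifiedPositives y κ := by simp [uncertifiedPositives, uncertified, hy]
  have vulnerable : robust i = false := by
    simpa using fun robust_i => not_detected (hrobust i mem robust_i)
  exact Finset.mem_filter.mpr ⟨mem, vulnerable⟩

lemma TP_add_sub_le_TP {n : ℕ} (hn : n ≤ FN y κ) (hFN : FN y yhat ≤ n) :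
    TP y κ + (FN y κ - n) ≤ TP y yhat := by
  have same_total : TP y κ + FN y κ = TP y yhat + FN y yhat :=
    (TP_add_FN y κ).trans (TP_add_FN y yhat).symm
  omega

end Counting

section WorstCase

variable {ι L : Type*} (R : Finset L) (I : Finset ι) (lam : ι → L → Bool)

/-- The quantity `FN_new`: the largest number of classes of `I` that are vulnerable at one common
location of `R`, where `lam i r = false` marks class `i` as vulnerable at `r`. It is `0` when `R` is
empty. -/
def maxVulnerable : ℕ :=
  R.sup fun r => (I.filter fun i => lam i r = false).card

lemma maxVulnerable_le_card : maxVulnerable R I lam ≤ I.card :=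
  Finset.sup_le fun _ _ => Finset.card_filter_le _ _

variable {R} in
lemma card_filter_le_maxVulnerable {r : L} (hr : r ∈ R) :
    (I.filter fun i => lam i r = false).card ≤ maxVulnerable R I lam :=
  Finset.le_sup (f := fun r => (I.filter fun i => lam i r = false).card) hr

end WorstCase

/-- `S r` is the set of inputs that an attacker acting at location `r` can produce. -/
theorem location_aware_improved_bounds_general {c : ℕ} {X L : Type*} (S : L → Set X)
    (R : Finset L) (y : Fin c → Bool) (infer : Fin c → X → Bool) (κ : Fin c → Bool)
    (hκ : ∀ i, κ i = true → y i = true → ∀ r ∈ R, ∀ x' ∈ S r, infer i x' = true)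
    (lam : Fin c → L → Bool)
    (hlam : ∀ i ∈ uncertifiedPositives y κ, ∀ r ∈ R, lam i r = true →
      ∀ x' ∈ S r, infer i x' = true)
    {r : L} (hr : r ∈ R) {x' : X} (hx' : x' ∈ S r) :
    TP κ y + ((uncertifiedPositives y κ).card - maxVulnerable R (uncertifiedPositives y κ) lam)
        ≤ TP y (fun i => infer i x')
      ∧ FN y (fun i => infer i x') ≤ maxVulnerable R (uncertifiedPositives y κ) lam := by
  have FN_le : FN y (fun i => infer i x') ≤ maxVulnerable R (uncertifiedPositives y κ) lam :=
    (FN_le_card_filter_uncertifiedPositives (fun i certified hy => hκ i certified hy r hr x' hx')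
      (fun i hi robust => hlam i hi r hr robust x' hx')).trans
      (card_filter_le_maxVulnerable _ lam hr)
  have le_FN : maxVulnerable R (uncertifiedPositives y κ) lam ≤ FN y κ :=
    (maxVulnerable_le_card R _ lam).trans_eq (card_uncertifiedPositives y κ)
  rw [TP_comm κ y, card_uncertifiedPositives]
  exact ⟨TP_add_sub_le_TP le_FN FN_le, FN_le⟩

/-- Location-aware certification yields the improved true-positive lower bound
`TP_new = TP_lower + (FN − FN_new)` under a single-patch attacker. -/
theorem location_aware_improved_bounds {w h γ c : ℕ}
    (x : Img w h γ) (R : Finset (Fin w → Fin h → Bool))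
    (y : Fin c → Bool) (infer : Fin c → Img w h γ → Bool) (κ : Fin c → Bool)
    (hκ : ∀ i : Fin c, κ i = true →
      ∀ x' ∈ patchSet x (↑R : Set (Fin w → Fin h → Bool)), infer i x' = y i)
    (I : Finset (Fin c))
    (hIdef : I = Finset.univ.filter fun i : Fin c => κ i = false ∧ y i = true)
    (lam : Fin c → (Fin w → Fin h → Bool) → Bool)
    (hlam : ∀ i ∈ I, ∀ r ∈ R, lam i r = true →
      ∀ x'' : Img w h γ, infer i (patch x r x'') = true)
    (TPlower FNnew : ℕ)
    (hTP : TPlower = (Finset.univ.filter fun i : Fin c => κ i = true ∧ y i = true).card)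
    (hFNnew : FNnew = R.sup fun r' => (I.filter fun i => lam i r' = false).card) :
    ∀ r ∈ R, ∀ x'' : Img w h γ,
      TPlower + (I.card - FNnew) ≤ TP y (fun i => infer i (patch x r x''))
      ∧ FN y (fun i => infer i (patch x r x'')) ≤ FNnew := by
  subst hIdef hTP hFNnew
  intro r hr x''
  exact location_aware_improved_bounds_general (fun r => Set.range (patch x r)) R y infer κ
    (fun i certified hy r hr _ ⟨x'', hx'⟩ => (hκ i certified _ ⟨r, hr, x'', hx'.symm⟩).trans hy)
    lam (fun i hi r hr robust => Set.forall_mem_range.mpr (hlam i hi r hr robust))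
    hr (Set.mem_range_self x'')
end

section
/- Let x ∈ X, R a finite set of patch regions, y : Fin c → Bool, infer : Fin c → X → Bool, and κ : Fin c → Bool such that for every class i with κ i = true one has infer i x' = y i for every x' ∈ S(x,R). Let I' := {i : κ i = false ∧ y i = false} be the uncertified negative classes, and suppose for each i ∈ I' there is λ i : R → Bool with: λ i r = true → infer i (patch(x,r,x'')) = false for all x'' ∈ X. Then for every r ∈ R and every x'' ∈ X, the prediction ŷ := (fun i => infer i (patch(x,r,x''))) satisfies FP(y,ŷ) ≤ FP_new, where FP_new := max_{r' ∈ R} |{i ∈ I' : λ i r' = false}|. (False-positive analogue of the location-aware certification theorem.) -/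
section Classification

variable {ι : Type*} [Fintype ι] {κ y yhat v : ι → Bool}

/-- The set of classes counted by `FP`, over an arbitrary finite type of classes. -/
def falsePositives (y yhat : ι → Bool) : Finset ι :=
  Finset.univ.filter fun i => y i = false ∧ yhat i = true

/-- The paper's `I'`: the classes absent from the ground truth `y` on which the certificate `κ`
says nothing. -/
def uncertifiedNegatives (κ y : ι → Bool) : Finset ι :=
  Finset.univ.filter fun i => κ i = false ∧ y i = false

theorem mem_falsePositives {i : ι} :
    i ∈ falsePositives y yhat ↔ y i = false ∧ yhat i = true :=
  Finset.mem_filter_univ i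

theorem mem_uncertifiedNegatives {i : ι} :
    i ∈ uncertifiedNegatives κ y ↔ κ i = false ∧ y i = false :=
  Finset.mem_filter_univ i

theorem falsePositives_subset_uncertifiedNegatives (hκ : ∀ i, κ i = true → yhat i = y i) :
    falsePositives y yhat ⊆ uncertifiedNegatives κ y := by
  intro i hi
  obtain ⟨hy, hyhat⟩ := mem_falsePositives.mp hi
  have prediction_ne : yhat i ≠ y i := by simp [hy, hyhat]
  have uncertified : κ i = false := Bool.eq_false_of_not_eq_true (mt (hκ i) prediction_ne)
  exact mem_uncertifiedNegatives.mpr ⟨uncertified, hy⟩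

theorem falsePositives_subset_filter_uncertifiedNegatives
    (hκ : ∀ i, κ i = true → yhat i = y i)
    (hv : ∀ i ∈ uncertifiedNegatives κ y, v i = true → yhat i = false) :
    falsePositives y yhat ⊆ (uncertifiedNegatives κ y).filter fun i => v i = false := by
  intro i hi
  have mem_negatives := falsePositives_subset_uncertifiedNegatives hκ hi
  have prediction_ne : yhat i ≠ false := by simp [(mem_falsePositives.mp hi).2]
  have vulnerable : v i = false :=
    Bool.eq_false_of_not_eq_true (mt (hv i mem_negatives) prediction_ne)
  exact Finset.mem_filter.mpr ⟨mem_negatives, vulnerable⟩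

/-- Here `attack r` is the set of inputs that an adversary acting at location `r` can produce. -/
theorem location_aware_fp_bound_general {X ρ : Type*} (attack : ρ → Set X) (R : Finset ρ)
    (infer : ι → X → Bool) (lam : ι → ρ → Bool)
    (hκ : ∀ i, κ i = true → ∀ r ∈ R, ∀ x' ∈ attack r, infer i x' = y i)
    (hlam : ∀ i ∈ uncertifiedNegatives κ y, ∀ r ∈ R, lam i r = true →
      ∀ x' ∈ attack r, infer i x' = false) :
    ∀ r ∈ R, ∀ x' ∈ attack r, (falsePositives y fun i => infer i x').card ≤
      R.sup fun r' => ((uncertifiedNegatives κ y).filter fun i => lam i r' = false).card := by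
  intro r hr x' hx'
  calc (falsePositives y fun i => infer i x').card
      ≤ ((uncertifiedNegatives κ y).filter fun i => lam i r = false).card :=
        Finset.card_le_card <| falsePositives_subset_filter_uncertifiedNegatives
          (fun i hi => hκ i hi r hr x' hx') (fun i hi hsafe => hlam i hi r hr hsafe x' hx')
    _ ≤ R.sup fun r' => ((uncertifiedNegatives κ y).filter fun i => lam i r' = false).card :=
        Finset.le_sup
          (f := fun r' => ((uncertifiedNegatives κ y).filter fun i => lam i r' = false).card) hr

end Classification

/-- False-positive analogue of the location-aware certification theorem: under a
single-patch attack at any location `r ∈ R` with any content `x''`, the number of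
false positives is at most `FP_new = max_{r' ∈ R} |{i ∈ I' : lam i r' = false}|`. -/
theorem location_aware_fp_bound {w h γ c : ℕ}
    (x : Img w h γ) (R : Finset (Fin w → Fin h → Bool))
    (y : Fin c → Bool) (infer : Fin c → Img w h γ → Bool) (κ : Fin c → Bool)
    (hκ : ∀ i : Fin c, κ i = true →
      ∀ x' ∈ patchSet x (↑R : Set (Fin w → Fin h → Bool)), infer i x' = y i)
    (I' : Finset (Fin c))
    (hIdef : I' = Finset.univ.filter fun i : Fin c => κ i = false ∧ y i = false)
    (lam : Fin c → (Fin w → Fin h → Bool) → Bool)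
    (hlam : ∀ i ∈ I', ∀ r ∈ R, lam i r = true →
      ∀ x'' : Img w h γ, infer i (patch x r x'') = false)
    (FPnew : ℕ)
    (hFPnew : FPnew = R.sup fun r' => (I'.filter fun i => lam i r' = false).card) :
    ∀ r ∈ R, ∀ x'' : Img w h γ,
      FP y (fun i => infer i (patch x r x'')) ≤ FPnew := by
  subst hIdef hFPnew
  intro r hr x''
  exact location_aware_fp_bound_general (fun r => Set.range (patch x r)) R infer lam
    (fun i hi r hr _ ⟨x'', hx'⟩ => hκ i hi _ ⟨r, hr, x'', hx'.symm⟩)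
    (fun i hi r hr hsafe => Set.forall_mem_range.mpr (hlam i hi r hr hsafe))
    r hr _ (Set.mem_range_self x'')
end

section
/- Let F : X → L be a single-label classifier, M a finite set of masks, m* ∈ M, x ∈ X, and y ∈ L with F((x ∘ m*) ∘ m) = y for every m ∈ M. Let r be a patch region covered by m*, x'' ∈ X arbitrary, and x' := patch(x,r,x''). Suppose m_dis ∈ M is a first-round disagreer on x' with incorrect label, i.e., F(x' ∘ m_dis) = ŷ_dis for some ŷ_dis ≠ y. Then the second-round predictions of m_dis are not all equal: there exist m₁, m₂ ∈ M with F((x' ∘ m_dis) ∘ m₁) ≠ F((x' ∘ m_dis) ∘ m₂); in particular F((x' ∘ m_dis) ∘ m*) = y while F((x' ∘ m_dis) ∘ m_dis) = ŷ_dis. (Incorrect disagreer masks fail to achieve second-round consensus in the double-masking algorithm.) -/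
/-- Masking an image: occluded pixels (`m i j = false`) are set to `0`. -/
def maskImg {w h γ : ℕ} (x : Img w h γ) (m : Fin w → Fin h → Bool) : Img w h γ :=
  fun i j k => if m i j then x i j k else 0

section Masking

variable {w h γ : ℕ} (x : Img w h γ)

theorem maskImg_right_comm (m₁ m₂ : Fin w → Fin h → Bool) :
    maskImg (maskImg x m₁) m₂ = maskImg (maskImg x m₂) m₁ := by
  funext i j k
  simp only [maskImg, ← ite_and, and_comm]

theorem maskImg_maskImg_self (m : Fin w → Fin h → Bool) :
    maskImg (maskImg x m) m = maskImg x m := by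
  funext i j k
  simp only [maskImg, ← ite_and, and_self]

theorem maskImg_patch_of_covers {m r : Fin w → Fin h → Bool}
    (hcov : ∀ i j, m i j = true → r i j = true) (x'' : Img w h γ) :
    maskImg (patch x r x'') m = maskImg x m := by
  funext i j k
  exact ite_congr rfl (fun hm => if_pos (hcov i j hm)) fun _ => rfl

end Masking

/-- Incorrect disagreer masks fail to achieve second-round consensus in the
double-masking algorithm: if `m*` has the two-mask robustness property, `r` is covered
by `m*`, `x' = patch(x, r, x'')`, and `m_dis ∈ M` is a first-round disagreer with
incorrect label `ŷ_dis ≠ y`, then the second-round predictions of `m_dis` are not all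
equal; in particular `F((x' ∘ m_dis) ∘ m*) = y` while `F((x' ∘ m_dis) ∘ m_dis) = ŷ_dis`. -/
theorem incorrect_disagreer_no_consensus {w h γ : ℕ} {L : Type*}
    (F : Img w h γ → L) (M : Finset (Fin w → Fin h → Bool))
    (mstar : Fin w → Fin h → Bool) (hmstar : mstar ∈ M)
    (x : Img w h γ) (y : L)
    (hcert : ∀ m ∈ M, F (maskImg (maskImg x mstar) m) = y)
    (r : Fin w → Fin h → Bool) (hcov : ∀ i j, mstar i j = true → r i j = true)
    (x'' : Img w h γ) (x' : Img w h γ) (hx' : x' = patch x r x'')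
    (mdis : Fin w → Fin h → Bool) (hmdis : mdis ∈ M)
    (ydis : L) (hdis : F (maskImg x' mdis) = ydis) (hne : ydis ≠ y) :
    (∃ m₁ ∈ M, ∃ m₂ ∈ M,
        F (maskImg (maskImg x' mdis) m₁) ≠ F (maskImg (maskImg x' mdis) m₂))
    ∧ F (maskImg (maskImg x' mdis) mstar) = y
    ∧ F (maskImg (maskImg x' mdis) mdis) = ydis := by
  have hstar : F (maskImg (maskImg x' mdis) mstar) = y := by
    calc F (maskImg (maskImg x' mdis) mstar)
        = F (maskImg (maskImg (patch x r x'') mstar) mdis) := by rw [hx', maskImg_right_comm]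
      _ = F (maskImg (maskImg x mstar) mdis) := by rw [maskImg_patch_of_covers x hcov]
      _ = y := hcert mdis hmdis
  have hself : F (maskImg (maskImg x' mdis) mdis) = ydis := by
    rw [maskImg_maskImg_self, hdis]
  have hdiffer : F (maskImg (maskImg x' mdis) mdis) ≠ F (maskImg (maskImg x' mdis) mstar) := by
    rwa [hself, hstar]
  exact ⟨⟨mdis, hmdis, mstar, hmstar, hdiffer⟩, hstar, hself⟩
end
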